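/- Let q be a prime power, let n ≥ 1, let f(x) = Σ_{i=0}^{n−1} a_i x^{q^i} ∈ F_{q^n}[x], and let y_0 ∈ F_{q^n}. For 1 ≤ μ ≤ n−1, the conditions H_0(y_0) = H_1(y_0) = … = H_{μ−1}(y_0) = 0 and H_μ(y_0) ≠ 0 hold if and only if the point ⟨(1, a_0 − y_0)⟩_{F_{q^n}} of PG(1, q^n) has weight μ with respect to U_f; equivalently, if and only if the q-polynomial (y_0 − a_0)x + f(x) ∈ F_{q^n}[x] induces an F_q-linear transformation of F_{q^n} whose kernel has F_q-dimension μ. -/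

import Mathlib

/-- `H_m(y)` evaluated at `y ∈ F_{q^n}`: the determinant of the `(n-m) × (n-m)` matrix
obtained from the matrix `H(y)` (the Dickson matrix of `f = ∑_{i=0}^{n-1} a_i x^{q^i}`
with each diagonal entry `a_0^{q^i}` replaced by `y^{q^i}`) by removing its first `m`
columns and last `m` rows. -/
noncomputable def Hdet (q n m : ℕ) {F : Type*} [Field F] (a : ℕ → F) (y : F) : F :=
  (Matrix.of fun i j : Fin (n - m) =>
      if i.val = j.val + m then y ^ q ^ i.val
      else a ((j.val + m + n - i.val) % n) ^ q ^ i.val).det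

/-!
Let `σ` be the `q`-Frobenius of `F`, let `g` be the `F_q`-linear map `x ↦ ∑ b_i σ^i(x)` obtained
from `f` by replacing `a_0` with `y_0`, and let `M_m` be the Dickson matrix of `g` without its first
`m` columns and last `m` rows. If `β` is an `F_q`-basis of `F` whose first `m` vectors lie in
`ker g`, then multiplying Moore matrices `Δ(w) = (σ^i(w_j))` by blocks gives
`det M_m * det Δ(β) = det Δ(β_0, …, β_{m-1}) * det Δ(g β_m, …, g β_{n-1})`.
A Moore determinant is nonzero exactly for linearly independent families, so for `m ≤ dim ker g` the
minor `det M_m` is nonzero iff `g β_m, …, g β_{n-1}` are independent, that is, iff `m = dim ker g`.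
The argument uses only that `σ^n = 1` and that `F` has degree `n` over the fixed field of `σ`.
-/

section LinearAlgebra

open Module

variable {K V W : Type*} [DivisionRing K] [AddCommGroup V] [Module K V]
  [AddCommGroup W] [Module K W]

lemma exists_basis_sum_inl_mem [FiniteDimensional K V] {U : Submodule K V} {m n : ℕ}
    (hm : m ≤ finrank K U) (hn : finrank K V = n) :
    ∃ β : Basis (Fin m ⊕ Fin (n - m)) K V, ∀ i, β (.inl i) ∈ U := by
  obtain ⟨u, hu⟩ := exists_linearIndependent_of_le_finrank hm
  have hu' : LinearIndependent K fun i => (u i : V) := hu.map' U.subtype U.ker_subtype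
  obtain ⟨C, hC⟩ := (Submodule.span K (Set.range fun i => (u i : V))).exists_isCompl
  have hrank : finrank K C = n - m := by
    have := Submodule.finrank_add_eq_of_isCompl hC
    rw [finrank_span_eq_card hu', Fintype.card_fin] at this
    omega
  refine ⟨((Basis.span hu').prod (finBasisOfFinrankEq K C hrank)).map
    (Submodule.prodEquivOfIsCompl _ C hC), fun i => ?_⟩
  simp [Basis.prod_apply, Basis.span_apply]

lemma range_eq_span_apply_inr {ι κ : Type*} (β : Basis (ι ⊕ κ) K V) {f : V →ₗ[K] W}
    (hf : ∀ i, f (β (.inl i)) = 0) :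
    f.range = Submodule.span K (Set.range fun j => f (β (.inr j))) := by
  rw [LinearMap.range_eq_map, ← β.span_eq, Submodule.map_span, ← Set.range_comp]
  refine le_antisymm (Submodule.span_le.2 ?_) (Submodule.span_mono ?_)
  · rintro _ ⟨i | j, rfl⟩
    · simp [hf]
    · exact Submodule.subset_span ⟨j, rfl⟩
  · rintro _ ⟨j, rfl⟩
    exact ⟨.inr j, rfl⟩

lemma linearIndependent_apply_inr_iff {ι κ : Type*} [Fintype ι] [Finite κ]
    (β : Basis (ι ⊕ κ) K V) {f : V →ₗ[K] W} (hf : ∀ i, f (β (.inl i)) = 0) :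
    LinearIndependent K (fun j => f (β (.inr j))) ↔ finrank K f.ker = Fintype.card ι := by
  have := Fintype.ofFinite κ
  have := Module.Finite.of_basis β
  have hV : finrank K V = Fintype.card ι + Fintype.card κ := by
    rw [finrank_eq_card_basis β, Fintype.card_sum]
  have hrank := f.finrank_range_add_finrank_ker
  rw [linearIndependent_iff_card_eq_finrank_span, Set.finrank, ← range_eq_span_apply_inr β hf]
  omega

end LinearAlgebra

section LinearizedMap

open Module

variable {K F : Type*} [Field K] [Field F] [Algebra K F] (σ : F →ₐ[K] F)

/-- The Moore matrix of `w` with respect to `σ`, with rows `w, σ w, σ² w, …`; for `σ` the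
`q`-Frobenius its entries are `w_j^{q^i}`. It detects linear independence over the fixed field. -/
def mooreMatrix {N : ℕ} (w : Fin N → F) : Matrix (Fin N) (Fin N) F :=
  Matrix.of fun i j => (σ ^ (i : ℕ)) (w j)

variable {σ}

lemma linearIndependent_of_det_mooreMatrix_ne_zero {N : ℕ} {w : Fin N → F}
    (h : (mooreMatrix σ w).det ≠ 0) : LinearIndependent K w :=
  ((Matrix.linearIndependent_cols_of_det_ne_zero h).restrict_scalars' K).of_comp
    (LinearMap.pi fun i : Fin N => (σ ^ (i : ℕ)).toLinearMap)

lemma eq_zero_of_sum_mul_eq_zero_of_fixed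
    (hfix : ∀ x, σ x = x → x ∈ Set.range (algebraMap K F)) {ι : Type*} [Fintype ι] {w c : ι → F}
    (hw : LinearIndependent K w) (hc : ∑ j, c j * w j = 0) {l : ι}
    (hratio : ∀ j, σ (c l) * c j = c l * σ (c j)) : c l = 0 := by
  by_contra hl
  have hl' : σ (c l) ≠ 0 := (map_ne_zero σ).2 hl
  have hquot (j) : c j / c l ∈ Set.range (algebraMap K F) := hfix _ <| by
    rw [map_div₀, div_eq_div_iff hl' hl]
    linear_combination -hratio j
  choose k hk using hquot
  have hsum : ∑ j, k j • w j = 0 := by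
    simp only [Algebra.smul_def, hk, div_mul_eq_mul_div, ← Finset.sum_div, hc, zero_div]
  have := hk l
  rw [Fintype.linearIndependent_iff.1 hw k hsum l, map_zero, div_self hl] at this
  exact zero_ne_one this

-- Applying `σ` to row `i` and eliminating `c 0` against row `i + 1` leaves a shorter system for
-- `σ ∘ w`; its triviality says that `σ` fixes the ratios `c j / c 0`.
lemma eq_zero_of_sum_mul_pow_apply_eq_zero
    (hfix : ∀ x, σ x = x → x ∈ Set.range (algebraMap K F)) {N : ℕ} {w c : Fin N → F}
    (hw : LinearIndependent K w) (hc : ∀ i < N, ∑ j, c j * (σ ^ i) (w j) = 0) : c = 0 := by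
  induction N with
  | zero => exact Subsingleton.elim _ _
  | succ N ih =>
    have hw' : LinearIndependent K (w ∘ Fin.succ) := hw.comp _ (Fin.succ_injective N)
    have hcomb : (fun j : Fin N => σ (c 0) * c j.succ - c 0 * σ (c j.succ)) = 0 := by
      refine ih (hw'.map' σ.toLinearMap (LinearMap.ker_eq_bot.2 σ.injective)) fun i hi => ?_
      have hrow := hc (i + 1) (by omega)
      have hσrow := congrArg σ (hc i (by omega))
      simp only [map_sum, map_mul, map_zero, ← AlgHom.mul_apply, ← pow_succ'] at hσrow
      rw [Fin.sum_univ_succ] at hrow hσrow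
      simp only [Function.comp_apply, AlgHom.toLinearMap_apply, ← AlgHom.mul_apply, ← pow_succ,
        sub_mul, Finset.sum_sub_distrib, mul_assoc, ← Finset.mul_sum]
      linear_combination σ (c 0) * hrow - c 0 * hσrow
    have hc0 : c 0 = 0 := by
      refine eq_zero_of_sum_mul_eq_zero_of_fixed hfix hw (by simpa using hc 0 N.succ_pos) ?_
      refine Fin.cases (mul_comm _ _) fun j => ?_
      exact sub_eq_zero.1 (congrFun hcomb j)
    have htail : c ∘ Fin.succ = 0 := ih hw' fun i hi => by
      simpa [Fin.sum_univ_succ, hc0] using hc i (by omega)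
    exact funext (Fin.cases hc0 (congrFun htail))

lemma det_mooreMatrix_ne_zero_iff (hfix : ∀ x, σ x = x → x ∈ Set.range (algebraMap K F)) {N : ℕ}
    {w : Fin N → F} : (mooreMatrix σ w).det ≠ 0 ↔ LinearIndependent K w := by
  refine ⟨linearIndependent_of_det_mooreMatrix_ne_zero, fun hw hdet => ?_⟩
  obtain ⟨c, hc0, hc⟩ := Matrix.exists_mulVec_eq_zero_iff.2 hdet
  refine hc0 (eq_zero_of_sum_mul_pow_apply_eq_zero hfix hw fun i hi => ?_)
  simpa [Matrix.mulVec, dotProduct, mooreMatrix, mul_comm] using congrFun hc ⟨i, hi⟩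

variable (σ)

/-- The map `x ↦ ∑ i, b i * σ ^ i x` induced by a `σ`-polynomial; for `σ` the `q`-Frobenius this is
the map induced by the `q`-polynomial with coefficients `b`. -/
def linearizedMap {n : ℕ} (b : Fin n → F) : F →ₗ[K] F :=
  ∑ i : Fin n, b i • (σ ^ (i : ℕ)).toLinearMap

/-- The Dickson matrix of `∑ i, b i * σ ^ i`, whose row `i` lists the coefficients of
`σ ^ i ∘ linearizedMap σ b` when `σ ^ n = 1`. Subtraction of indices in `Fin n` is modulo `n`. -/
def dicksonMatrix {n : ℕ} (b : Fin n → F) : Matrix (Fin n) (Fin n) F :=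
  Matrix.of fun i j => (σ ^ (i : ℕ)) (b (j - i))

/-- The Dickson matrix without its first `m` columns and last `m` rows; it is empty, hence of
determinant `1`, once `n ≤ m`. -/
def dicksonMinor {n : ℕ} (b : Fin n → F) (m : ℕ) : Matrix (Fin (n - m)) (Fin (n - m)) F :=
  (dicksonMatrix σ b).submatrix (fun i => ⟨i, by omega⟩) (fun j => ⟨m + j, by omega⟩)

variable {σ} {n : ℕ}

lemma linearizedMap_apply (b : Fin n → F) (x : F) :
    linearizedMap σ b x = ∑ i : Fin n, b i * (σ ^ (i : ℕ)) x := by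
  simp [linearizedMap, LinearMap.sum_apply]

lemma sum_dicksonMatrix_mul_pow_apply (hpow : σ ^ n = 1) (b : Fin n → F) (i : Fin n) (x : F) :
    ∑ j : Fin n, dicksonMatrix σ b i j * (σ ^ (j : ℕ)) x = (σ ^ (i : ℕ)) (linearizedMap σ b x) := by
  have : NeZero n := .of_pos i.pos
  rw [linearizedMap_apply, map_sum, ← Equiv.sum_comp (Equiv.addRight i)]
  refine Fintype.sum_congr _ _ fun k => ?_
  have hshift : σ ^ ((k + i : Fin n) : ℕ) = σ ^ (i : ℕ) * σ ^ (k : ℕ) := by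
    rw [Fin.val_add, ← pow_eq_pow_mod _ hpow, add_comm, pow_add]
  rw [map_mul, Equiv.coe_addRight, hshift, AlgHom.mul_apply, dicksonMatrix, Matrix.of_apply,
    add_sub_cancel_right]

/-- The splitting of the indices below `n` into the first `m` and the last `n - m`, used to cut
`n × n` matrices into blocks. -/
def finSumFinSubEquiv {m n : ℕ} (hm : m ≤ n) : Fin m ⊕ Fin (n - m) ≃ Fin n :=
  finSumFinEquiv.trans (finCongr (Nat.add_sub_of_le hm))

-- Left multiplication of the Moore matrix of `β` by `T` keeps its first `m` rows and replaces the
-- others by the rows `σ ^ i (g β)`, `i < n - m`, where `g = linearizedMap σ b` kills the first `m`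
-- columns.
lemma det_dicksonMinor_mul_det_mooreMatrix (hpow : σ ^ n = 1) (b : Fin n → F) {m : ℕ} (hm : m ≤ n)
    {β : Fin m ⊕ Fin (n - m) → F} (hβ : ∀ i, linearizedMap σ b (β (.inl i)) = 0) :
    (dicksonMinor σ b m).det * (mooreMatrix σ (β ∘ (finSumFinSubEquiv hm).symm)).det =
      (mooreMatrix σ (β ∘ .inl)).det * (mooreMatrix σ (linearizedMap σ b ∘ β ∘ .inr)).det := by
  set e := finSumFinSubEquiv hm
  set M := (mooreMatrix σ (β ∘ e.symm)).submatrix e e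
  let T : Matrix (Fin m ⊕ Fin (n - m)) (Fin m ⊕ Fin (n - m)) F :=
    .fromBlocks 1 0 (.of fun i j => dicksonMatrix σ b ⟨i, by omega⟩ (e (.inl j)))
      (dicksonMinor σ b m)
  have hM (k j) : M k j = (σ ^ (e k : ℕ)) (β j) := by simp [M, mooreMatrix]
  have htop (i j) : (T * M) (.inl i) j = (σ ^ (i : ℕ)) (β j) := by
    simp [T, Matrix.mul_apply, Matrix.one_apply, hM, e, finSumFinSubEquiv]
  have hbottom (i j) : (T * M) (.inr i) j = (σ ^ (i : ℕ)) (linearizedMap σ b (β j)) := by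
    rw [← sum_dicksonMatrix_mul_pow_apply hpow b ⟨i, by omega⟩, ← e.sum_comp]
    simp only [Matrix.mul_apply, Fintype.sum_sum_type, hM]
    rfl
  have hprod : T * M = .fromBlocks (mooreMatrix σ (β ∘ .inl))
      (.of fun i j => (σ ^ (i : ℕ)) (β (.inr j))) 0
      (mooreMatrix σ (linearizedMap σ b ∘ β ∘ .inr)) := by
    ext (i | i) (j | j) <;> simp [htop, hbottom, hβ, mooreMatrix]
  have hdet := congrArg Matrix.det hprod
  rwa [Matrix.det_mul, Matrix.det_fromBlocks_zero₁₂, Matrix.det_one, one_mul,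
    Matrix.det_submatrix_equiv_self, Matrix.det_fromBlocks_zero₂₁] at hdet

variable [FiniteDimensional K F]

lemma det_dicksonMinor_ne_zero_iff (hfix : ∀ x, σ x = x → x ∈ Set.range (algebraMap K F))
    (hpow : σ ^ n = 1) (hrank : finrank K F = n) (b : Fin n → F) {m : ℕ}
    (hm : m ≤ finrank K (linearizedMap σ b).ker) :
    (dicksonMinor σ b m).det ≠ 0 ↔ finrank K (linearizedMap σ b).ker = m := by
  obtain ⟨β, hβ⟩ := exists_basis_sum_inl_mem hm hrank
  have hmn : m ≤ n := hrank ▸ hm.trans (Submodule.finrank_le _)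
  have hidentity := det_dicksonMinor_mul_det_mooreMatrix hpow b hmn hβ
  have hbasis : (mooreMatrix σ (β ∘ (finSumFinSubEquiv hmn).symm)).det ≠ 0 :=
    (det_mooreMatrix_ne_zero_iff hfix).2 (β.linearIndependent.comp _ (Equiv.injective _))
  have hker : (mooreMatrix σ (β ∘ .inl)).det ≠ 0 :=
    (det_mooreMatrix_ne_zero_iff hfix).2 (β.linearIndependent.comp _ Sum.inl_injective)
  calc (dicksonMinor σ b m).det ≠ 0
      ↔ (mooreMatrix σ (linearizedMap σ b ∘ β ∘ .inr)).det ≠ 0 := by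
        rw [← mul_ne_zero_iff_right hbasis, hidentity, mul_ne_zero_iff_left hker]
    _ ↔ LinearIndependent K fun j => linearizedMap σ b (β (.inr j)) :=
        det_mooreMatrix_ne_zero_iff hfix
    _ ↔ finrank K (linearizedMap σ b).ker = m := by
        rw [linearIndependent_apply_inr_iff β hβ, Fintype.card_fin]

theorem isLeast_det_dicksonMinor_ne_zero (hfix : ∀ x, σ x = x → x ∈ Set.range (algebraMap K F))
    (hpow : σ ^ n = 1) (hrank : finrank K F = n) (b : Fin n → F) :
    IsLeast {m | (dicksonMinor σ b m).det ≠ 0} (finrank K (linearizedMap σ b).ker) := by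
  refine ⟨(det_dicksonMinor_ne_zero_iff hfix hpow hrank b le_rfl).2 rfl, fun m hm => ?_⟩
  by_contra! hlt
  exact hlt.ne' ((det_dicksonMinor_ne_zero_iff hfix hpow hrank b hlt.le).1 hm)

end LinearizedMap

section Frobenius

open Module

variable (K : Type*) {F : Type*} [Field K] [Fintype K] [Field F] [Algebra K F]

lemma frobeniusAlgHom_pow_apply (i : ℕ) (x : F) :
    (FiniteField.frobeniusAlgHom K F ^ i) x = x ^ Fintype.card K ^ i := by
  simp [AlgHom.coe_pow, FiniteField.coe_frobeniusAlgHom, pow_iterate]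

lemma mem_range_algebraMap_of_frobeniusAlgHom_apply_eq [Finite F] {x : F}
    (hx : FiniteField.frobeniusAlgHom K F x = x) : x ∈ Set.range (algebraMap K F) := by
  rw [IsGalois.mem_range_algebraMap_iff_fixed]
  intro τ
  obtain ⟨k, hk⟩ := (FiniteField.bijective_frobeniusAlgHom_pow K F).surjective τ
  rw [← AlgEquiv.coe_toAlgHom, ← hk, AlgHom.coe_pow]
  exact Function.iterate_fixed hx k

lemma exists_field_card_eq_finrank_eq {F : Type*} [Field F] [Fintype F] {q n : ℕ}
    (hF : Fintype.card F = q ^ n) :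
    ∃ (K : Type) (_ : Field K) (_ : Fintype K) (_ : Algebra K F),
      Fintype.card K = q ∧ finrank K F = n := by
  have hn : n ≠ 0 := by
    rintro rfl
    exact Fintype.one_lt_card.ne' (hF.trans (pow_zero q))
  obtain ⟨p, e, hp, he, rfl⟩ :=
    (isPrimePow_pow_iff hn).1 (hF ▸ FiniteField.isPrimePow_card F)
  have : Fact p.Prime := ⟨hp.nat_prime⟩
  have : CharP F p := charP_of_card_eq_prime_pow (hF.trans (pow_mul p e n).symm)
  let : Algebra (ZMod p) F := ZMod.algebra F p
  have hrank : finrank (ZMod p) F = e * n := Nat.pow_right_injective hp.nat_prime.two_le <| by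
    simp only [FiniteField.pow_finrank_eq_card, hF, pow_mul]
  obtain ⟨φ⟩ := FiniteField.nonempty_algHom_of_finrank_dvd (F := ZMod p)
    (K := GaloisField p e) (L := F) (by simp [GaloisField.finrank p he.ne', hrank])
  let : Fintype (GaloisField p e) := Fintype.ofFinite _
  let : Algebra (GaloisField p e) F := φ.toRingHom.toAlgebra
  have hK : Fintype.card (GaloisField p e) = p ^ e := by
    rw [← Nat.card_eq_fintype_card, GaloisField.card p e he.ne']
  refine ⟨GaloisField p e, inferInstance, inferInstance, inferInstance, hK, ?_⟩
  have hcard := Module.card_eq_pow_finrank (K := GaloisField p e) (V := F)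
  rw [hF, hK] at hcard
  exact (Nat.pow_right_injective (hK ▸ Fintype.one_lt_card) hcard).symm

lemma dicksonMatrix_update_zero_apply {n : ℕ} (a : ℕ → F) (y : F) (i j : Fin n) :
    dicksonMatrix (FiniteField.frobeniusAlgHom K F)
        (fun k : Fin n => Function.update a 0 y k) i j =
      if i = j then y ^ Fintype.card K ^ (i : ℕ)
      else a ((j + n - i) % n) ^ Fintype.card K ^ (i : ℕ) := by
  have : NeZero n := .of_pos i.pos
  rw [dicksonMatrix, Matrix.of_apply, frobeniusAlgHom_pow_apply]
  split_ifs with hij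
  · rw [hij, sub_self, Fin.val_zero, Function.update_self]
  · have hsub : ((j - i : Fin n) : ℕ) ≠ 0 := Fin.val_ne_zero_iff.2 (sub_ne_zero.2 (Ne.symm hij))
    rw [Function.update_of_ne hsub, Fin.val_sub]
    congr 3
    omega

lemma Hdet_eq_det_dicksonMinor (n m : ℕ) (a : ℕ → F) (y : F) :
    Hdet (Fintype.card K) n m a y =
      (dicksonMinor (FiniteField.frobeniusAlgHom K F)
        (fun i : Fin n => Function.update a 0 y i) m).det := by
  refine congrArg Matrix.det (Matrix.ext fun i j => ?_)
  simp only [dicksonMinor, Matrix.submatrix_apply, Matrix.of_apply,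
    dicksonMatrix_update_zero_apply, Fin.mk.injEq, add_comm m]

lemma linearizedMap_update_zero_apply {n : ℕ} [NeZero n] (a : ℕ → F) (y x : F) :
    linearizedMap (FiniteField.frobeniusAlgHom K F)
        (fun i : Fin n => Function.update a 0 y i) x =
      (y - a 0) * x + ∑ i ∈ Finset.range n, a i * x ^ Fintype.card K ^ i := by
  obtain ⟨k, rfl⟩ := Nat.exists_eq_succ_of_ne_zero (NeZero.ne n)
  simp only [linearizedMap_apply, frobeniusAlgHom_pow_apply]
  rw [Fin.sum_univ_eq_sum_range (fun i => Function.update a 0 y i * x ^ Fintype.card K ^ i),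
    Finset.sum_range_succ', Finset.sum_range_succ']
  simp only [ne_eq, Nat.succ_ne_zero, not_false_eq_true, Function.update_of_ne,
    Function.update_self, pow_zero, pow_one]
  ring

lemma forall_lt_Hdet_eq_zero_and_ne_zero_iff [Finite F] (a : ℕ → F) (y : F) (μ : ℕ) :
    ((∀ m < μ, Hdet (Fintype.card K) (finrank K F) m a y = 0) ∧
        Hdet (Fintype.card K) (finrank K F) μ a y ≠ 0) ↔
      finrank K (linearizedMap (FiniteField.frobeniusAlgHom K F)
        (fun i : Fin (finrank K F) => Function.update a 0 y i)).ker = μ := by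
  have hleast := isLeast_det_dicksonMinor_ne_zero
    (fun _ => mem_range_algebraMap_of_frobeniusAlgHom_apply_eq K)
    (FiniteField.orderOf_frobeniusAlgHom K F ▸ pow_orderOf_eq_one _) rfl
    (fun i : Fin (finrank K F) => Function.update a 0 y i)
  simp only [← Hdet_eq_det_dicksonMinor] at hleast
  constructor
  · rintro ⟨hzero, hne⟩
    exact hleast.unique ⟨hne, fun m hm => not_lt.1 fun hlt => hm (hzero m hlt)⟩
  · rintro rfl
    exact ⟨fun m hm => not_not.1 fun hne => (hleast.2 hne).not_gt hm, hleast.1⟩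

end Frobenius

theorem stmt_15_general (q n : ℕ) (F : Type*) [Field F] [Fintype F]
    (hF : Fintype.card F = q ^ n) (a : ℕ → F) (y0 : F) (μ : ℕ) :
    (((∀ m, m < μ → Hdet q n m a y0 = 0) ∧ Hdet q n μ a y0 ≠ 0) ↔
        Nat.card {x : F // ∑ i ∈ Finset.range n, a i * x ^ q ^ i = (a 0 - y0) * x}
          = q ^ μ) ∧
    (((∀ m, m < μ → Hdet q n m a y0 = 0) ∧ Hdet q n μ a y0 ≠ 0) ↔
        Nat.card {x : F // (y0 - a 0) * x + ∑ i ∈ Finset.range n, a i * x ^ q ^ i = 0}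
          = q ^ μ) := by
  obtain ⟨K, _, _, _, rfl, rfl⟩ := exists_field_card_eq_finrank_eq hF
  have : NeZero (Module.finrank K F) := ⟨Module.finrank_pos.ne'⟩
  set g := linearizedMap (FiniteField.frobeniusAlgHom K F)
    (fun i : Fin (Module.finrank K F) => Function.update a 0 y0 i) with hg
  have hweight : Nat.card {x : F // ∑ i ∈ Finset.range (Module.finrank K F),
      a i * x ^ Fintype.card K ^ i = (a 0 - y0) * x} = Nat.card g.ker :=
    Nat.card_congr <| Equiv.subtypeEquivRight fun x => by
      rw [LinearMap.mem_ker, hg, linearizedMap_update_zero_apply]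
      constructor <;> intro h <;> linear_combination h
  have hker : Nat.card {x : F // (y0 - a 0) * x + ∑ i ∈ Finset.range (Module.finrank K F),
      a i * x ^ Fintype.card K ^ i = 0} = Nat.card g.ker :=
    Nat.card_congr <| Equiv.subtypeEquivRight fun x => by
      rw [LinearMap.mem_ker, hg, linearizedMap_update_zero_apply]
  rw [hweight, hker, and_self, Module.natCard_eq_pow_finrank (K := K), Nat.card_eq_fintype_card,
    (Nat.pow_right_injective Fintype.one_lt_card).eq_iff]
  exact forall_lt_Hdet_eq_zero_and_ne_zero_iff K a y0 μ

/-- For `f = ∑_{i=0}^{n-1} a_i x^{q^i} ∈ F_{q^n}[x]`, `y₀ ∈ F_{q^n}`, `1 ≤ μ ≤ n-1`: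
`H_0(y₀) = ⋯ = H_{μ-1}(y₀) = 0` and `H_μ(y₀) ≠ 0` hold iff the point
`⟨(1, a_0 - y₀)⟩` of `PG(1,q^n)` has weight `μ` w.r.t. `U_f`, i.e. iff
`#{x : f(x) = (a_0 - y₀)·x} = q^μ`; equivalently, iff the kernel of the `F_q`-linear map
induced by `(y₀ - a_0)x + f(x)` has `F_q`-dimension `μ`, i.e.
`#{x : (y₀ - a_0)·x + f(x) = 0} = q^μ`. -/
theorem stmt_15 (p e q n : ℕ) (hp : p.Prime) (he : 0 < e) (hq : q = p ^ e)
    (hn : 0 < n) (F : Type*) [Field F] [Fintype F] (hF : Fintype.card F = q ^ n)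
    (a : ℕ → F) (y0 : F) (μ : ℕ) (hμ1 : 1 ≤ μ) (hμ2 : μ ≤ n - 1) :
    (((∀ m, m < μ → Hdet q n m a y0 = 0) ∧ Hdet q n μ a y0 ≠ 0) ↔
        Nat.card {x : F // ∑ i ∈ Finset.range n, a i * x ^ q ^ i = (a 0 - y0) * x}
          = q ^ μ) ∧
    (((∀ m, m < μ → Hdet q n m a y0 = 0) ∧ Hdet q n μ a y0 ≠ 0) ↔
        Nat.card {x : F // (y0 - a 0) * x + ∑ i ∈ Finset.range n, a i * x ^ q ^ i = 0}
          = q ^ μ) :=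
  stmt_15_general q n F hF a y0 μ
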